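/- Let G be a connected finite simple graph on vertex set {1,…,n} that is weakly closed with respect to the natural labeling, i.e., for every edge {i,j} of G with i < j and every k with i < k < j, one has {i,k} ∈ E(G) or {k,j} ∈ E(G). Let k be a field of characteristic p > 0 and S = k[X_1,…,X_n,Y_1,…,Y_n]. Then the element f := (Y_1 · [1,2] · [2,3] ⋯ [n−1,n] · X_n)^{p−1} belongs to the colon ideal (J_G^{[p]} : J_G), i.e., f · J_G ⊆ J_G^{[p]}. -/

import Mathlib

open MvPolynomial

variable (K : Type*) [Field K]

/-- The variable `X_i` of `S = k[X_1, …, X_n, Y_1, …, Y_n]`. -/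
noncomputable def Xv {n : ℕ} (i : Fin n) : MvPolynomial (Fin n ⊕ Fin n) K :=
  MvPolynomial.X (Sum.inl i)

/-- The variable `Y_i` of `S = k[X_1, …, X_n, Y_1, …, Y_n]`. -/
noncomputable def Yv {n : ℕ} (i : Fin n) : MvPolynomial (Fin n ⊕ Fin n) K :=
  MvPolynomial.X (Sum.inr i)

/-- The binomial `[i, j] = X_i Y_j - X_j Y_i`. -/
noncomputable def brkt {n : ℕ} (i j : Fin n) : MvPolynomial (Fin n ⊕ Fin n) K :=
  Xv K i * Yv K j - Xv K j * Yv K i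

/-- The binomial edge ideal `J_G = ([i, j] : {i, j} ∈ E(G))`. -/
noncomputable def binomialEdgeIdeal {n : ℕ} (G : SimpleGraph (Fin n)) :
    Ideal (MvPolynomial (Fin n ⊕ Fin n) K) :=
  Ideal.span {f | ∃ i j : Fin n, G.Adj i j ∧ f = brkt K i j}

/-- The `p`-th Frobenius power `I^{[p]}` of an ideal `I`, generated by `{f^p : f ∈ I}`. -/
def frobeniusPower {R : Type*} [CommRing R] (p : ℕ) (I : Ideal R) : Ideal R :=
  Ideal.span ((fun f => f ^ p) '' (I : Set R))

/-- `F(v) = (Y_{v_1} [v_1,v_2] [v_2,v_3] ⋯ [v_{n-1},v_n] X_{v_n})^{p-1}`. -/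
noncomputable def Fpoly {n : ℕ} (p : ℕ) (v : Fin n → Fin n) (hn : 0 < n) :
    MvPolynomial (Fin n ⊕ Fin n) K :=
  (Yv K (v ⟨0, hn⟩) *
      (∏ t : Fin (n - 1),
        brkt K (v ⟨t, by have := t.isLt; omega⟩) (v ⟨(t : ℕ) + 1, by have := t.isLt; omega⟩)) *
      Xv K (v ⟨n - 1, by omega⟩)) ^ (p - 1)

/-! Modulo the `p`-th powers of the generators of `J_G`, the polynomial
`F(v) = (Y_{v_1} [v_1,v_2] ⋯ [v_{n-1},v_n] X_{v_n})^{p-1}` does not change when two consecutive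
vertices `a`, `b` of the word `v` that are adjacent in `G` are exchanged: we have
`[b,a]^{p-1} = [a,b]^{p-1}` and, by the Plücker relation `[c,a][b,d] - [c,b][a,d] = -[a,b][c,d]`,
the two values differ by a multiple of `[a,b]^{p-1} [a,b] = [a,b]^p`. For an edge `{i, j}` of a
weakly closed graph such exchanges lead from `1, 2, …, n` to a word `v` in which `i` and `j` are
consecutive. There `[i,j]^{p-1}` divides `F(v)`, so `F(v) [i,j]` is a multiple of `[i,j]^p`. -/

section TraceEquiv

variable {V : Type*}

/-- Two words are *trace equivalent* with respect to a relation `A` of allowed commutations if the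
second arises from the first by finitely many exchanges of consecutive letters `a`, `b` with
`A a b`. The constructors follow those of `List.Perm`; there is none for symmetry, so this is an
equivalence relation only when `A` is symmetric. -/
inductive TraceEquiv (A : V → V → Prop) : List V → List V → Prop
  | refl (l : List V) : TraceEquiv A l l
  | cons (x : V) {l l' : List V} : TraceEquiv A l l' → TraceEquiv A (x :: l) (x :: l')
  | swap {a b : V} (hab : A a b) (l : List V) : TraceEquiv A (a :: b :: l) (b :: a :: l)
  | trans {l l' l'' : List V} : TraceEquiv A l l' → TraceEquiv A l' l'' → TraceEquiv A l l''

namespace TraceEquiv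

variable {A : V → V → Prop}

theorem append_left (m : List V) {l l' : List V} (h : TraceEquiv A l l') :
    TraceEquiv A (m ++ l) (m ++ l') := by
  induction m with
  | nil => exact h
  | cons x m ih => exact ih.cons x

theorem cons_append {a : V} {m : List V} (hm : ∀ x ∈ m, A a x) (l : List V) :
    TraceEquiv A (a :: (m ++ l)) (m ++ a :: l) := by
  induction m with
  | nil => exact refl _
  | cons x m ih =>
    rw [List.forall_mem_cons] at hm
    exact (swap hm.1 _).trans ((ih hm.2).cons x)

theorem filter_append_filter_not (P : V → Prop) [DecidablePred P] {l : List V}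
    (hl : l.Pairwise fun a b => ¬P a → P b → A a b) :
    TraceEquiv A l (l.filter (P ·) ++ l.filter (¬P ·)) := by
  induction l with
  | nil => exact refl _
  | cons x l ih =>
    obtain ⟨hx, hl⟩ := List.pairwise_cons.1 hl
    have hcons := (ih hl).cons x
    by_cases hPx : P x
    · simpa [hPx] using hcons
    · have hcomm : ∀ y ∈ l.filter (P ·), A x y := fun y hy => by
        obtain ⟨hyl, hPy⟩ := List.mem_filter.1 hy
        exact hx y hyl hPx (of_decide_eq_true hPy)
      simpa [hPx] using hcons.trans (cons_append hcomm _)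

end TraceEquiv

end TraceEquiv

section WeaklyClosed

variable {V : Type*} [LinearOrder V]

theorem filter_eq_or_eq_of_sortedLT {l : List V} (hl : l.SortedLT) {i j : V} (hi : i ∈ l)
    (hj : j ∈ l) (hlt : i < j) : l.filter (fun x => x = i ∨ x = j) = [i, j] := by
  have hpair : [i, j].SortedLT := List.Pairwise.sortedLT (by simpa using hlt)
  refine (hl.pairwise.filter _).sortedLT.eq_of_mem_iff hpair fun x => ?_
  simp only [List.mem_filter, decide_eq_true_eq, List.mem_cons, List.not_mem_nil, or_false]
  exact and_iff_right_of_imp (by rintro (rfl | rfl) <;> assumption)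

/-- A graph on an ordered vertex set is *weakly closed* (with respect to that order) if every
vertex strictly between the ends of an edge is adjacent to one of them. -/
def IsWeaklyClosed (G : SimpleGraph V) : Prop :=
  ∀ i j k : V, G.Adj i j → i < k → k < j → G.Adj i k ∨ G.Adj k j

theorem IsWeaklyClosed.exists_traceEquiv_adjacent {G : SimpleGraph V} (hG : IsWeaklyClosed G)
    {l : List V} (hl : l.SortedLT) {i j : V} (hi : i ∈ l) (hj : j ∈ l) (hij : G.Adj i j)
    (hlt : i < j) : ∃ l₁ l₂, TraceEquiv G.Adj l (l₁ ++ i :: j :: l₂) := by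
  classical
  -- Every `x` with `i < x < j` that is adjacent to `i` is first moved to the left of `i`; the
  -- vertices still separating `i` from `j` are then adjacent to `j`, which is moved past them.
  let P : V → Prop := fun x => x < i ∨ x < j ∧ G.Adj i x
  let Q : V → Prop := fun x => x = i ∨ x = j
  set r := l.filter (¬P ·)
  have hr : r.SortedLT := (hl.pairwise.filter _).sortedLT
  have hmem_r {x : V} : x ∈ r ↔ x ∈ l ∧ ¬P x := by simp [r]
  have hP : l.Pairwise fun a b => ¬P a → P b → G.Adj a b :=
    hl.pairwise.imp fun {a b} hab hPa hPb => by
      have hia : i ≤ a := not_lt.1 fun h => hPa (.inl h)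
      obtain ⟨hbj, hib⟩ := hPb.resolve_left (hia.trans_lt hab).not_gt
      rcases hia.eq_or_lt with rfl | hia
      · exact hib
      · exact (hG i b a hib hia hab).resolve_left fun h => hPa (.inr ⟨hab.trans hbj, h⟩)
  have hQ : r.Pairwise fun a b => ¬Q a → Q b → G.Adj a b :=
    hr.pairwise.imp_of_mem fun {a b} ha _ hab hQa hQb => by
      have hPa := (hmem_r.1 ha).2
      have hia : i < a := (not_lt.1 fun h => hPa (.inl h)).lt_of_ne' fun h => hQa (.inl h)
      obtain rfl := hQb.resolve_left (hia.trans hab).ne'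
      exact (hG i b a hij hia hab).resolve_left fun h => hPa (.inr ⟨hab, h⟩)
  have hQr : r.filter (Q ·) = [i, j] :=
    filter_eq_or_eq_of_sortedLT hr (hmem_r.2 ⟨hi, by simp [P]⟩)
      (hmem_r.2 ⟨hj, by simp [P, hlt.le]⟩) hlt
  have hsplit_l : TraceEquiv G.Adj l (l.filter (P ·) ++ r) :=
    TraceEquiv.filter_append_filter_not P hP
  have hsplit_r : TraceEquiv G.Adj r (i :: j :: r.filter (¬Q ·)) := by
    simpa only [hQr, List.cons_append, List.nil_append] using
      TraceEquiv.filter_append_filter_not Q hQ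
  exact ⟨_, _, hsplit_l.trans (hsplit_r.append_left _)⟩

end WeaklyClosed

section DetChain

variable {R : Type*} [CommRing R]

/-- The determinant `[a, b]` of two vectors in `R²`. -/
def pairDet (a b : R × R) : R := a.1 * b.2 - b.1 * a.2

/-- The product `[c, a₁] [a₁, a₂] ⋯ [aₘ, d]` of the determinants of consecutive vectors along the
path from `c` to `d` through a list `a₁, …, aₘ`. -/
def detChain (c : R × R) : List (R × R) → R × R → R
  | [], d => pairDet c d
  | a :: l, d => pairDet c a * detChain a l d

theorem pairDet_swap (a b : R × R) : pairDet b a = -pairDet a b := by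
  simp only [pairDet]
  ring

theorem pairDet_mul_pairDet_sub (a b c d : R × R) :
    pairDet c a * pairDet b d - pairDet c b * pairDet a d = pairDet a b * -pairDet c d := by
  simp only [pairDet]
  ring

theorem detChain_append_cons (c : R × R) (l₁ : List (R × R)) (a : R × R) (l₂ : List (R × R))
    (d : R × R) : detChain c (l₁ ++ a :: l₂) d = detChain c l₁ a * detChain a l₂ d := by
  induction l₁ generalizing c with
  | nil => rfl
  | cons b l₁ ih => rw [List.cons_append, detChain, detChain, ih, mul_assoc]

theorem pairDet_dvd_detChain (c : R × R) (l₁ : List (R × R)) (a b : R × R) (l₂ : List (R × R))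
    (d : R × R) : pairDet a b ∣ detChain c (l₁ ++ a :: b :: l₂) d := by
  rw [detChain_append_cons, detChain]
  exact (dvd_mul_right _ _).mul_left _

theorem exists_detChain_eq_pairDet_mul (l : List (R × R)) (d : R × R) :
    ∃ e r, ∀ c, detChain c l d = pairDet c e * r := by
  cases l with
  | nil => exact ⟨d, 1, fun _ => (mul_one _).symm⟩
  | cons e l => exact ⟨e, detChain e l d, fun _ => rfl⟩

theorem detChain_ofFn (c : R × R) {m : ℕ} (f : Fin (m + 1) → R × R) (d : R × R) :
    detChain c (List.ofFn f) d =
      pairDet c (f 0) * (∏ t : Fin m, pairDet (f t.castSucc) (f t.succ)) *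
        pairDet (f (Fin.last m)) d := by
  induction m generalizing c with
  | zero => simp [detChain]
  | succ m ih =>
    rw [List.ofFn_succ, detChain, ih, Fin.prod_univ_succ]
    simp only [Fin.succ_last, Fin.castSucc_zero, Fin.succ_castSucc]
    ring

variable {q : ℕ} (hq : (-1 : R) ^ q = 1)
include hq

theorem pairDet_swap_pow (a b : R × R) : pairDet b a ^ q = pairDet a b ^ q := by
  rw [pairDet_swap, neg_pow, hq, one_mul]

theorem pairDet_mul_pow_swap {a b : R × R} (hab : pairDet a b ^ (q + 1) = 0) (c d : R × R) :
    (pairDet c a * (pairDet a b * pairDet b d)) ^ q =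
      (pairDet c b * (pairDet b a * pairDet a d)) ^ q := by
  obtain ⟨e, he⟩ : pairDet a b ∣
      (pairDet c a * pairDet b d) ^ q - (pairDet c b * pairDet a d) ^ q :=
    (Dvd.intro _ (pairDet_mul_pairDet_sub a b c d).symm).trans (sub_dvd_pow_sub_pow _ _ q)
  simp only [mul_pow, pairDet_swap_pow hq a b] at he ⊢
  linear_combination pairDet a b ^ q * he + e * hab

variable {V : Type*} {u : V → R × R}

theorem TraceEquiv.detChain_pow_eq {A : V → V → Prop}
    (hA : ∀ a b, A a b → pairDet (u a) (u b) ^ (q + 1) = 0) {l l' : List V}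
    (h : TraceEquiv A l l') (c d : R × R) :
    detChain c (l.map u) d ^ q = detChain c (l'.map u) d ^ q := by
  induction h generalizing c with
  | refl => rfl
  | cons x _ ih => simp only [List.map_cons, detChain, mul_pow, ih]
  | trans _ _ ih₁ ih₂ => exact (ih₁ c).trans (ih₂ c)
  | @swap a b hab l =>
    obtain ⟨e, r, her⟩ := exists_detChain_eq_pairDet_mul (l.map u) d
    simp only [List.map_cons, detChain, her, ← mul_assoc, mul_pow _ r]
    simpa only [mul_assoc] using
      congrArg (· * r ^ q) (pairDet_mul_pow_swap hq (hA a b hab) c e)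

theorem IsWeaklyClosed.detChain_pow_mul_pairDet_eq_zero [LinearOrder V] {G : SimpleGraph V}
    (hG : IsWeaklyClosed G) (hu : ∀ a b, G.Adj a b → pairDet (u a) (u b) ^ (q + 1) = 0)
    {l : List V} (hl : l.SortedLT) {i j : V} (hi : i ∈ l) (hj : j ∈ l) (hij : G.Adj i j)
    (c d : R × R) : detChain c (l.map u) d ^ q * pairDet (u i) (u j) = 0 := by
  wlog hlt : i < j generalizing i j
  · have hji := hij.ne.lt_or_gt.resolve_left hlt
    rw [pairDet_swap, mul_neg, this hj hi hij.symm hji, neg_zero]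
  obtain ⟨l₁, l₂, h⟩ := hG.exists_traceEquiv_adjacent hl hi hj hij hlt
  rw [h.detChain_pow_eq hq hu, List.map_append, List.map_cons, List.map_cons]
  refine eq_zero_of_zero_dvd ?_
  rw [← hu i j hij, pow_succ]
  exact mul_dvd_mul_right (pow_dvd_pow_of_dvd (pairDet_dvd_detChain ..) q) _

end DetChain

section BinomialEdgeIdeal

variable {K} {n : ℕ}

theorem brkt_pow_mem_frobeniusPower {G : SimpleGraph (Fin n)} {i j : Fin n} (h : G.Adj i j)
    (p : ℕ) : brkt K i j ^ p ∈ frobeniusPower p (binomialEdgeIdeal K G) :=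
  Ideal.subset_span ⟨_, Ideal.subset_span ⟨i, j, h, rfl⟩, rfl⟩

variable {R : Type*} [CommRing R] (φ : MvPolynomial (Fin n ⊕ Fin n) K →+* R)

theorem map_brkt (i j : Fin n) :
    φ (brkt K i j) = pairDet (φ (Xv K i), φ (Yv K i)) (φ (Xv K j), φ (Yv K j)) := by
  simp only [brkt, pairDet, map_sub, map_mul]

-- The end factors are determinants too: `Y_i = [(1, 0), (X_i, Y_i)]`, `X_i = [(X_i, Y_i), (0, 1)]`.
theorem map_Fpoly_id (p : ℕ) (hn : 0 < n) :
    φ (Fpoly K p id hn) =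
      detChain (1, 0) ((List.finRange n).map fun i => (φ (Xv K i), φ (Yv K i))) (0, 1) ^
        (p - 1) := by
  obtain ⟨m, rfl⟩ := Nat.exists_eq_succ_of_ne_zero hn.ne'
  rw [← List.ofFn_eq_map, detChain_ofFn]
  simp only [Fpoly, map_pow, map_mul, map_prod, map_brkt, pairDet, id, one_mul, mul_zero, sub_zero,
    mul_one, zero_mul]
  rfl

end BinomialEdgeIdeal

theorem neg_one_pow_char_sub_one (R : Type*) [Ring R] (p : ℕ) [hp : Fact p.Prime] [CharP R p] :
    (-1 : R) ^ (p - 1) = 1 := by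
  have h : (-1 : R) ^ (p - 1 + 1) = -1 := by
    rw [Nat.sub_add_cancel hp.out.one_le, neg_one_pow_char]
  simpa [pow_succ] using h

theorem Fpoly_mem_colon_general {n : ℕ} (G : SimpleGraph (Fin n)) (hn : 0 < n)
    (hwc : IsWeaklyClosed G) (p : ℕ) (hp : 0 < p) (hsign : (-1 : K) ^ (p - 1) = 1) :
    ∀ g ∈ binomialEdgeIdeal K G,
      Fpoly K p id hn * g ∈ frobeniusPower p (binomialEdgeIdeal K G) := by
  set I := frobeniusPower p (binomialEdgeIdeal K G)
  let φ := Ideal.Quotient.mk I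
  let u : Fin n → _ × _ := fun i => (φ (Xv K i), φ (Yv K i))
  have hsign' : (-1 : MvPolynomial (Fin n ⊕ Fin n) K ⧸ I) ^ (p - 1) = 1 := by
    simpa using congrArg (algebraMap K (MvPolynomial (Fin n ⊕ Fin n) K ⧸ I)) hsign
  have hu (a b : Fin n) (hab : G.Adj a b) : pairDet (u a) (u b) ^ (p - 1 + 1) = 0 := by
    rw [Nat.sub_add_cancel hp, ← map_brkt φ, ← map_pow]
    exact Ideal.Quotient.eq_zero_iff_mem.2 (brkt_pow_mem_frobeniusPower hab p)
  suffices h : binomialEdgeIdeal K G ≤ I.colon {Fpoly K p id hn} by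
    intro g hg
    simpa [mul_comm] using Submodule.mem_colon_singleton.1 (h hg)
  refine Ideal.span_le.2 ?_
  rintro _ ⟨i, j, hij, rfl⟩
  rw [SetLike.mem_coe, Submodule.mem_colon_singleton, smul_eq_mul, mul_comm,
    ← Ideal.Quotient.eq_zero_iff_mem, map_mul, map_Fpoly_id, map_brkt]
  exact hwc.detChain_pow_mul_pairDet_eq_zero hsign' hu (List.sortedLT_finRange n)
    (List.mem_finRange i) (List.mem_finRange j) hij _ _

/-- If `G` is a connected graph on `{1, …, n}` that is weakly closed with respect to the
natural labeling, then `f = (Y_1 [1,2] [2,3] ⋯ [n-1,n] X_n)^{p-1}` belongs to the colon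
ideal `(J_G^{[p]} : J_G)`, i.e. `f · J_G ⊆ J_G^{[p]}`. -/
theorem Fpoly_mem_colon {n : ℕ} (G : SimpleGraph (Fin n)) (hG : G.Connected)
    (hwc : ∀ i j k : Fin n, G.Adj i j → i < k → k < j → G.Adj i k ∨ G.Adj k j)
    (p : ℕ) (hp : p.Prime) [CharP K p] :
    ∀ g ∈ binomialEdgeIdeal K G,
      Fpoly K p id (by obtain ⟨i⟩ := hG.nonempty; have := i.isLt; omega) * g ∈
        frobeniusPower p (binomialEdgeIdeal K G) :=
  have : Fact p.Prime := ⟨hp⟩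
  Fpoly_mem_colon_general K G _ hwc p hp.pos (neg_one_pow_char_sub_one K p)
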